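/- arXiv:2103.10004 — 2 statements merged into one kernel-verified Lean document; each statement's English description precedes it below -/
import Mathlib

section
/- For m = 7, 8, 9, the covering functional of the three-dimensional unit cross-polytope satisfies γ_m(K₁) = 2/3; that is, γ₇(K₁) = γ₈(K₁) = γ₉(K₁) = 2/3. -/
open Pointwise

/-- The unit cross-polytope in ℝ³. -/
def K1 : Set (Fin 3 → ℝ) := {x | |x 0| + |x 1| + |x 2| ≤ 1}

/-- `K1` can be covered by `m` translates of `lam • K1`. -/
def CoversWith (m : ℕ) (lam : ℝ) : Prop :=
  ∃ u : Fin m → (Fin 3 → ℝ), K1 ⊆ ⋃ i, (u i +ᵥ lam • K1)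

/-!
The `n`-dimensional cross-polytope is the unit ball of `ℓ¹`, so its `m`-th covering functional is
the least radius at which its external covering number is at most `m`. Pushing a point of the ball
towards the origin by `1 / n` along its largest coordinate puts it in the ball of radius
`1 - 1 / n`: if the step overshoots zero, then all coordinates are at most `1 / n`, and `n ≥ 2`
suffices. Hence the `2 * n` balls of this radius centred at the points `± eᵢ / n` cover it.
Conversely, a vertex and a facet centroid, as well as two vertices, are at distance at least
`2 * (1 - 1 / n)`, and the centroids of two facets whose sign vectors differ in `h` coordinates are
at distance `2 * h / n`. The vertices, together with the facet centroids labelled by a binary code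
of minimum distance `n - 1`, are thus so far apart that each ball of radius less than `1 - 1 / n`
contains at most one of them. For `n = 3` the even sign vectors form such a code with `4` words, and
`2 * 3 + 4 = 10` exceeds `9`.
-/

open Metric Set
open Fintype (card)
open scoped Finset NNReal

section CoveringRatios

variable {E F : Type*} [AddCommGroup E] [Module ℝ E] [AddCommGroup F] [Module ℝ F]

/-- The positive ratios `lam` such that `m` translates of `lam • K` cover `K`. The covering
functional `γ_m(K)` is the least element of this set. -/
def coveringRatios (m : ℕ) (K : Set E) : Set ℝ :=
  {lam | 0 < lam ∧ ∃ u : Fin m → E, K ⊆ ⋃ i, (u i +ᵥ lam • K)}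

lemma coveringRatios_image (m : ℕ) (e : E ≃ₗ[ℝ] F) (K : Set E) :
    coveringRatios m (e '' K) = coveringRatios m K := by
  ext lam
  have image_translate (u : E) : e u +ᵥ lam • e '' K = e '' (u +ᵥ lam • K) := by
    simp only [← image_vadd, ← image_smul, image_image, vadd_eq_add, map_add, map_smul]
  refine and_congr_right fun _ ↦ ?_
  rw [← (Equiv.arrowCongr (Equiv.refl _) e.toEquiv).exists_congr_right]
  simp [image_translate, ← image_iUnion, image_subset_image_iff e.injective]

end CoveringRatios

section MetricSpace

variable {X : Type*} [PseudoMetricSpace X] {A : Set X}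

lemma externalCoveringNumber_le_natCast_iff {ε : ℝ≥0} {m : ℕ} (hA : A.Nonempty) :
    externalCoveringNumber ε A ≤ m ↔ ∃ u : Fin m → X, A ⊆ ⋃ i, closedBall (u i) ε := by
  constructor
  · intro h
    obtain ⟨N, hN, hNm⟩ : ∃ N, IsCover ε A N ∧ N.encard ≤ m := by
      simpa [externalCoveringNumber, iInf_lt_iff, ENat.lt_natCast_add_one_iff] using
        ENat.lt_natCast_add_one_iff.2 h
    lift N to Finset X using finite_of_encard_le_coe hNm
    have : Nonempty N := (hN.nonempty hA).to_subtype
    obtain ⟨g⟩ : Nonempty (N ↪ Fin m) :=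
      Function.Embedding.nonempty_of_card_le (by simpa using hNm)
    have hsurj : Function.Surjective (Function.invFun g) := Function.invFun_surjective g.injective
    refine ⟨fun i ↦ (Function.invFun g i : N), hN.subset_iUnion_closedBall.trans ?_⟩
    simp [hsurj.iUnion_comp fun y : N ↦ closedBall (y : X) ε, iUnion_subtype]
  · rintro ⟨u, hu⟩
    have hcover : IsCover ε A (range u) := by
      rwa [isCover_iff_subset_iUnion_closedBall, biUnion_range]
    calc externalCoveringNumber ε A ≤ (range u).encard := hcover.externalCoveringNumber_le_encard
      _ ≤ (univ : Set (Fin m)).encard := by rw [← image_univ]; exact encard_image_le u univ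
      _ = m := by simp

lemma card_le_packingNumber {κ : Type*} [Fintype κ] {ε : ℝ≥0} {p : κ → X} (hp : ∀ k, p k ∈ A)
    (hsep : Pairwise fun k l ↦ ε < dist (p k) (p l)) : card κ ≤ packingNumber ε A := by
  have hinj : Function.Injective p := fun k l hkl ↦ by
    by_contra hne
    exact (hsep hne).not_ge (by simp [hkl])
  have hrange : IsSeparated ε (range p) := Pairwise.range_pairwise fun k l hkl ↦ by
    simpa only [Function.onFun, edist_nndist, ← coe_nndist, ENNReal.coe_lt_coe,
      ← NNReal.coe_lt_coe] using hsep hkl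
  calc (card κ : ℕ∞) = ENat.card κ := (ENat.card_eq_coe_fintype_card).symm
    _ ≤ (range p).encard := hinj.encard_range
    _ ≤ packingNumber ε A := hrange.encard_le_packingNumber (range_subset_iff.2 hp)

end MetricSpace

lemma coe_mem_coveringRatios_unitClosedBall {E : Type*} [SeminormedAddCommGroup E]
    [NormedSpace ℝ E] {m : ℕ} {r : ℝ≥0} :
    (r : ℝ) ∈ coveringRatios m (closedBall (0 : E) 1) ↔
      0 < r ∧ externalCoveringNumber r (closedBall (0 : E) 1) ≤ m := by
  simp +contextual [coveringRatios, externalCoveringNumber_le_natCast_iff, smul_closedBall',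
    pos_iff_ne_zero]

section Signs

lemma exists_unit_mul_abs_eq {R : Type*} [Ring R] [LinearOrder R] (a : R) :
    ∃ s : ℤˣ, (s : ℤ) * |a| = a := by
  rcases abs_choice a with h | h
  · exact ⟨1, by simp [h]⟩
  · exact ⟨-1, by simp [h]⟩

lemma abs_unit_intCast_sub_of_ne {R : Type*} [Ring R] [LinearOrder R] [IsOrderedRing R]
    {s t : ℤˣ} (h : s ≠ t) : |((s : ℤ) : R) - (t : ℤ)| = 2 := by
  rw [Int.units_ne_iff_eq_neg.1 h]
  rcases Int.units_eq_one_or t with rfl | rfl <;> norm_num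

end Signs

section CrossPolytope

variable {ι : Type*} [Fintype ι]

lemma l1_norm_sub_single {β : ι → Type*} [∀ i, SeminormedAddCommGroup (β i)] [DecidableEq ι]
    (x : PiLp 1 β) (i : ι) (a : β i) :
    ‖x - PiLp.single 1 i a‖ = ‖x‖ - ‖x i‖ + ‖x i - a‖ := by
  have off_i : ∑ j ∈ {i}ᶜ, ‖(x - PiLp.single 1 i a) j‖ = ∑ j ∈ {i}ᶜ, ‖x j‖ :=
    Finset.sum_congr rfl fun j hj ↦ by simp_all
  rw [PiLp.norm_eq_of_L1, PiLp.norm_eq_of_L1, Fintype.sum_eq_add_sum_compl i, off_i,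
    Fintype.sum_eq_add_sum_compl i fun j ↦ ‖x j‖, PiLp.sub_apply, PiLp.single_eq_same]
  ring

lemma exists_l1_norm_sub_single_le [DecidableEq ι] [Nontrivial ι] {x : PiLp 1 fun _ : ι ↦ ℝ}
    (hx : ‖x‖ ≤ 1) :
    ∃ (i : ι) (s : ℤˣ), ‖x - PiLp.single 1 i ((s : ℤ) * (card ι : ℝ)⁻¹)‖ ≤ 1 - (card ι : ℝ)⁻¹ := by
  obtain ⟨i, hi⟩ := Finite.exists_max fun j ↦ |x j|
  obtain ⟨s, hs⟩ := exists_unit_mul_abs_eq (x i)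
  have hcard : (2 : ℝ) ≤ card ι := mod_cast Fintype.one_lt_card
  have norm_le : ‖x‖ ≤ card ι * |x i| := by
    simpa [PiLp.norm_eq_of_L1] using Finset.sum_le_card_nsmul Finset.univ _ _ fun j _ ↦ hi j
  have step : |x i - (s : ℤ) * (card ι : ℝ)⁻¹| = |(|x i| - (card ι : ℝ)⁻¹)| := by
    nth_rw 1 [← hs]
    rw [← mul_sub, abs_mul, abs_unit_intCast, one_mul]
  refine ⟨i, s, ?_⟩
  rw [l1_norm_sub_single, Real.norm_eq_abs, Real.norm_eq_abs, step]
  rcases le_total (card ι : ℝ)⁻¹ |x i| with h | h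
  · rw [abs_of_nonneg (sub_nonneg.2 h)]
    linarith
  · rw [abs_of_nonpos (sub_nonpos.2 h)]
    have h_scaled := mul_le_mul_of_nonneg_left h (sub_nonneg.2 hcard)
    have h_cancel := mul_inv_cancel₀ (show (card ι : ℝ) ≠ 0 by positivity)
    linarith

lemma externalCoveringNumber_l1_unitClosedBall_le [Nontrivial ι] :
    externalCoveringNumber (1 - (card ι : ℝ≥0)⁻¹) (closedBall (0 : PiLp 1 fun _ : ι ↦ ℝ) 1) ≤
      (2 * card ι : ℕ) := by
  classical
  have hcard : (card ι : ℝ≥0)⁻¹ ≤ 1 := inv_le_one_of_one_le₀ (mod_cast Fintype.card_pos)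
  let e : Fin (2 * card ι) ≃ ι × ℤˣ := (Fintype.equivFinOfCardEq (by simp [mul_comm])).symm
  refine (externalCoveringNumber_le_natCast_iff (nonempty_closedBall.2 zero_le_one)).2
    ⟨fun k ↦ PiLp.single 1 (e k).1 (((e k).2 : ℤ) * (card ι : ℝ)⁻¹), fun x hx ↦ ?_⟩
  obtain ⟨i, s, his⟩ := exists_l1_norm_sub_single_le (mem_closedBall_zero_iff.1 hx)
  refine mem_iUnion.2 ⟨e.symm (i, s), ?_⟩
  simpa [dist_eq_norm, NNReal.coe_sub hcard] using his

/-- The centroid of the facet of the unit cross-polytope lying in the orthant with signs `s`. -/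
noncomputable def facetCentroid (s : ι → ℤˣ) : PiLp 1 fun _ : ι ↦ ℝ :=
  WithLp.toLp 1 fun i ↦ (s i : ℤ) * (card ι : ℝ)⁻¹

lemma abs_facetCentroid_apply (s : ι → ℤˣ) (i : ι) : |facetCentroid s i| = (card ι : ℝ)⁻¹ := by
  simp [facetCentroid, abs_mul, abs_unit_intCast]

lemma norm_facetCentroid [Nonempty ι] (s : ι → ℤˣ) : ‖facetCentroid s‖ = 1 := by
  simp [PiLp.norm_eq_of_L1, abs_facetCentroid_apply]

lemma dist_facetCentroid (s t : ι → ℤˣ) :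
    dist (facetCentroid s) (facetCentroid t) = 2 * hammingDist s t * (card ι : ℝ)⁻¹ := by
  have coord (i : ι) : dist (facetCentroid s i) (facetCentroid t i) =
      if s i ≠ t i then 2 * (card ι : ℝ)⁻¹ else 0 := by
    split_ifs with h
    · simp [facetCentroid, Real.dist_eq, ← sub_mul, abs_mul, abs_unit_intCast_sub_of_ne h]
    · simp_all [facetCentroid]
  rw [PiLp.dist_eq_of_L1, Finset.sum_congr rfl fun i _ ↦ coord i, ← Finset.sum_filter,
    Finset.sum_const, nsmul_eq_mul, hammingDist]
  ring

/-- The vertex of the unit cross-polytope on the `v.1`-th axis, on the side given by the sign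
`v.2`. -/
noncomputable def crossPolytopeVertex [DecidableEq ι] (v : ι × ℤˣ) : PiLp 1 fun _ : ι ↦ ℝ :=
  PiLp.single 1 v.1 ((v.2 : ℤ) : ℝ)

lemma norm_crossPolytopeVertex [DecidableEq ι] (v : ι × ℤˣ) : ‖crossPolytopeVertex v‖ = 1 := by
  simp [crossPolytopeVertex, abs_unit_intCast]

lemma dist_crossPolytopeVertex_of_ne [DecidableEq ι] {v w : ι × ℤˣ} (h : v ≠ w) :
    dist (crossPolytopeVertex v) (crossPolytopeVertex w) = 2 := by
  obtain ⟨i, s⟩ := v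
  obtain ⟨j, t⟩ := w
  rcases eq_or_ne i j with rfl | hij
  · have hst : s ≠ t := by simpa using h
    simpa [crossPolytopeVertex, Real.dist_eq] using abs_unit_intCast_sub_of_ne hst
  · rw [dist_eq_norm, crossPolytopeVertex.eq_def (j, t), l1_norm_sub_single,
      norm_crossPolytopeVertex]
    norm_num [crossPolytopeVertex, hij.symm, abs_unit_intCast]

lemma le_dist_facetCentroid_crossPolytopeVertex [DecidableEq ι] (s : ι → ℤˣ) (v : ι × ℤˣ) :
    2 * (1 - (card ι : ℝ)⁻¹) ≤ dist (facetCentroid s) (crossPolytopeVertex v) := by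
  have : Nonempty ι := ⟨v.1⟩
  have tri := abs_sub_abs_le_abs_sub ((v.2 : ℤ) : ℝ) (facetCentroid s v.1)
  rw [abs_unit_intCast, abs_facetCentroid_apply, abs_sub_comm] at tri
  rw [dist_eq_norm, crossPolytopeVertex, l1_norm_sub_single, norm_facetCentroid,
    Real.norm_eq_abs, abs_facetCentroid_apply, Real.norm_eq_abs]
  linarith

lemma le_packingNumber_l1_unitClosedBall [Nonempty ι] {C : Finset (ι → ℤˣ)}
    (hC : (C : Set (ι → ℤˣ)).Pairwise fun s t ↦ card ι ≤ hammingDist s t + 1) {ε : ℝ≥0}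
    (hε : ε < 2 * (1 - (card ι : ℝ)⁻¹)) :
    (2 * card ι + #C : ℕ) ≤ packingNumber ε (closedBall (0 : PiLp 1 fun _ : ι ↦ ℝ) 1) := by
  classical
  let p : (ι × ℤˣ) ⊕ C → PiLp 1 fun _ : ι ↦ ℝ :=
    Sum.elim crossPolytopeVertex fun s ↦ facetCentroid s
  have mem_ball (k) : p k ∈ closedBall 0 1 := by
    rcases k with v | s <;> simp [p, norm_crossPolytopeVertex, norm_facetCentroid]
  have separated : Pairwise fun k l ↦ ε < dist (p k) (p l) := by
    refine fun k l hkl ↦ hε.trans_le ?_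
    rcases k with v | s <;> rcases l with w | t
    · have : 0 ≤ (card ι : ℝ)⁻¹ := by positivity
      simp only [p, Sum.elim_inl, dist_crossPolytopeVertex_of_ne (Sum.inl_injective.ne_iff.1 hkl)]
      linarith
    · rw [dist_comm]
      exact le_dist_facetCentroid_crossPolytopeVertex t.1 v
    · exact le_dist_facetCentroid_crossPolytopeVertex s.1 w
    · have hst : (s : ι → ℤˣ) ≠ t := fun h ↦ hkl (congrArg Sum.inr (Subtype.ext h))
      have hham : (card ι : ℝ) - 1 ≤ hammingDist s.1 t.1 :=
        sub_le_iff_le_add.2 (mod_cast hC s.2 t.2 hst)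
      calc 2 * (1 - (card ι : ℝ)⁻¹) = 2 * (card ι - 1) * (card ι : ℝ)⁻¹ := by field_simp
        _ ≤ 2 * hammingDist s.1 t.1 * (card ι : ℝ)⁻¹ := by gcongr
        _ = dist (p (.inr s)) (p (.inr t)) := (dist_facetCentroid _ _).symm
  simpa [mul_comm] using card_le_packingNumber mem_ball separated

theorem gamma_seven_eight_nine_eq_two_thirds_general [Nontrivial ι] {C : Finset (ι → ℤˣ)}
    (hC : (C : Set (ι → ℤˣ)).Pairwise fun s t ↦ card ι ≤ hammingDist s t + 1) {m : ℕ}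
    (hm : 2 * card ι ≤ m) (hmC : m < 2 * card ι + #C) :
    IsLeast (coveringRatios m (closedBall (0 : PiLp 1 fun _ : ι ↦ ℝ) 1))
      (1 - (card ι : ℝ)⁻¹) := by
  have hcard : (card ι : ℝ≥0)⁻¹ < 1 := inv_lt_one_of_one_lt₀ (mod_cast Fintype.one_lt_card)
  constructor
  · have hcover := externalCoveringNumber_l1_unitClosedBall_le.trans
      (Nat.cast_le (α := ℕ∞).2 hm)
    simpa [NNReal.coe_sub hcard.le] using
      coe_mem_coveringRatios_unitClosedBall.2 ⟨tsub_pos_of_lt hcard, hcover⟩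
  · intro lam hlam
    lift lam to ℝ≥0 using hlam.1.le
    by_contra! hlt
    have hpack : (2 * card ι + #C : ℕ) ≤ (m : ℕ∞) := calc
      _ ≤ packingNumber (2 * lam) (closedBall (0 : PiLp 1 fun _ : ι ↦ ℝ) 1) :=
        le_packingNumber_l1_unitClosedBall hC (by simpa using hlt)
      _ ≤ externalCoveringNumber lam _ := packingNumber_two_mul_le_externalCoveringNumber _ _
      _ ≤ m := (coe_mem_coveringRatios_unitClosedBall.1 hlam).2
    exact hmC.not_ge (mod_cast hpack)

end CrossPolytope

lemma K1_eq_image_l1_unitClosedBall :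
    K1 = WithLp.linearEquiv 1 ℝ (Fin 3 → ℝ) '' closedBall 0 1 := by
  rw [LinearEquiv.image_eq_preimage_symm]
  ext x
  simp [K1, PiLp.norm_eq_of_L1, Fin.sum_univ_three]

lemma setOf_coversWith_eq_coveringRatios (m : ℕ) :
    {lam | 0 < lam ∧ CoversWith m lam} =
      coveringRatios m (closedBall (0 : PiLp 1 fun _ : Fin 3 ↦ ℝ) 1) := by
  rw [← coveringRatios_image m (WithLp.linearEquiv 1 ℝ (Fin 3 → ℝ)),
    ← K1_eq_image_l1_unitClosedBall]
  rfl

/-- The binary even-weight code of length `3`, written with signs. -/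
def evenSigns : Finset (Fin 3 → ℤˣ) := {s | ∏ i, s i = 1}

lemma card_evenSigns : #evenSigns = 4 := by decide

lemma pairwise_evenSigns_two_le_hammingDist :
    (evenSigns : Set (Fin 3 → ℤˣ)).Pairwise fun s t ↦ 2 ≤ hammingDist s t := by
  have : ∀ s ∈ evenSigns, ∀ t ∈ evenSigns, s ≠ t → 2 ≤ hammingDist s t := by decide
  exact fun s hs t ht ↦ this s hs t ht

lemma isLeast_coversWith_two_thirds {m : ℕ} (h6 : 6 ≤ m) (h9 : m ≤ 9) :
    IsLeast {lam : ℝ | 0 < lam ∧ CoversWith m lam} (2 / 3) := by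
  have hcode : (evenSigns : Set (Fin 3 → ℤˣ)).Pairwise
      fun s t ↦ card (Fin 3) ≤ hammingDist s t + 1 :=
    pairwise_evenSigns_two_le_hammingDist.imp fun _ _ h ↦ by simpa using h
  have hγ := gamma_seven_eight_nine_eq_two_thirds_general hcode (m := m) (by simpa using h6)
    (by rw [Fintype.card_fin, card_evenSigns]; lia)
  rw [setOf_coversWith_eq_coveringRatios]
  convert hγ using 1
  norm_num

/-- γ₇(K₁) = γ₈(K₁) = γ₉(K₁) = 2/3. -/
theorem gamma_seven_eight_nine_eq_two_thirds :
    IsLeast {lam : ℝ | 0 < lam ∧ CoversWith 7 lam} (2 / 3) ∧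
    IsLeast {lam : ℝ | 0 < lam ∧ CoversWith 8 lam} (2 / 3) ∧
    IsLeast {lam : ℝ | 0 < lam ∧ CoversWith 9 lam} (2 / 3) :=
  ⟨isLeast_coversWith_two_thirds (by norm_num) (by norm_num),
    isLeast_coversWith_two_thirds (by norm_num) (by norm_num),
    isLeast_coversWith_two_thirds (by norm_num) (by norm_num)⟩
end

section
/- Let 0 < λ ≤ 1 and u ∈ ℝ³, and suppose the homothetic copy λK₁ + u contains a vertex v of K₁. Then for every facet F of K₁ containing v, there exists a ratio μ with 0 ≤ μ ≤ λ such that F ∩ (λK₁ + u) ⊆ v + μ·(F − v); that is, the intersection of λK₁ + u with each facet of K₁ incident to v is contained in a homothetic copy of that facet, with homothety centre v and ratio not greater than λ. -/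
open Pointwise

/-- The six vertices of the unit cross-polytope. -/
def K1Vertices : Set (Fin 3 → ℝ) :=
  {![1, 0, 0], ![-1, 0, 0], ![0, 1, 0], ![0, -1, 0], ![0, 0, 1], ![0, 0, -1]}

/-- The facet of `K1` determined by a sign vector `e` (each `e i` being `1` or `-1`). -/
def K1Facet (e : Fin 3 → ℝ) : Set (Fin 3 → ℝ) :=
  convexHull ℝ {![e 0, 0, 0], ![0, e 1, 0], ![0, 0, e 2]}

/-!
A point of a facet of the cross-polytope is `x = ∑ i, w i • e i • bᵢ`, with `b` the standard basis,
`e` a sign vector and `w` in the standard simplex, and its `ℓ¹`-distance to the vertex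
`v = e j • bⱼ` is exactly `2 * (1 - w j)`. If `x` and `v` both lie in an `ℓ¹`-ball of radius `r`,
this distance is at most `2 * r`, so `1 - r ≤ w j`: the barycentric coordinate at `v` is large,
which says precisely that `x` lies in the image of the facet under the homothety with centre `v`
and ratio `r`.
-/

section StdSimplex

variable {𝕜 ι : Type*} [Field 𝕜] [LinearOrder 𝕜] [IsStrictOrderedRing 𝕜] [Fintype ι]
  [DecidableEq ι] {w : ι → 𝕜} {j : ι}

theorem sum_abs_sub_single_of_mem_stdSimplex (hw : w ∈ stdSimplex 𝕜 ι) :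
    ∑ i, |w i - (Pi.single j 1 : ι → 𝕜) i| = 2 * (1 - w j) := by
  have abs_eq (i : ι) : |w i - (Pi.single j 1 : ι → 𝕜) i| =
      w i + (Pi.single j (1 - 2 * w j) : ι → 𝕜) i := by
    obtain rfl | hij := eq_or_ne i j
    · rw [Pi.single_eq_same, Pi.single_eq_same,
        abs_of_nonpos (sub_nonpos.2 (mem_Icc_of_mem_stdSimplex hw i).2)]
      ring
    · rw [Pi.single_eq_of_ne hij, Pi.single_eq_of_ne hij, sub_zero, add_zero,
        abs_of_nonneg (hw.1 i)]
  rw [Finset.sum_congr rfl fun i _ ↦ abs_eq i, Finset.sum_add_distrib, hw.2,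
    Finset.sum_pi_single', if_pos (Finset.mem_univ j)]
  ring

theorem mem_image_homothety_stdSimplex {r : 𝕜} (hr : 0 < r) (hw : w ∈ stdSimplex 𝕜 ι)
    (hj : 1 - r ≤ w j) : w ∈ AffineMap.homothety (Pi.single j 1 : ι → 𝕜) r '' stdSimplex 𝕜 ι := by
  refine ⟨AffineMap.homothety (Pi.single j 1 : ι → 𝕜) r⁻¹ w, ⟨fun i ↦ ?_, ?_⟩,
    (AffineMap.homothety_eq_iff_of_mul_eq_one (inv_mul_cancel₀ hr.ne')).1 rfl⟩
  · simp only [AffineMap.homothety_apply, vsub_eq_sub, vadd_eq_add, Pi.add_apply, Pi.smul_apply,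
      Pi.sub_apply, smul_eq_mul]
    obtain rfl | hij := eq_or_ne i j
    · have : r⁻¹ * (1 - w i) ≤ 1 := (inv_mul_le_one₀ hr).2 (sub_le_comm.1 hj)
      rw [Pi.single_eq_same]
      linarith
    · rw [Pi.single_eq_of_ne hij, sub_zero, add_zero]
      exact mul_nonneg (inv_nonneg.2 hr.le) (hw.1 i)
  · simp [AffineMap.homothety_apply, Finset.sum_add_distrib, ← Finset.mul_sum, hw.2]

end StdSimplex

/-- The unit ball of the `ℓ¹`-norm on `ι → 𝕜`, generalizing `K1`. It is written out coordinatewise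
because the norm of `ι → ℝ` is the sup norm. -/
def crossPolytope (𝕜 ι : Type*) [Field 𝕜] [LinearOrder 𝕜] [Fintype ι] : Set (ι → 𝕜) :=
  {x | ∑ i, |x i| ≤ 1}

/-- The facet of the cross-polytope in the orthant of the sign vector `e`, generalizing `K1Facet`:
the simplex with vertices `e i` times the `i`-th standard basis vector. -/
def crossPolytopeFacet {𝕜 ι : Type*} [Field 𝕜] [LinearOrder 𝕜] [DecidableEq ι] (e : ι → 𝕜) :
    Set (ι → 𝕜) :=
  convexHull 𝕜 (Set.range fun i ↦ Pi.single i (e i))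

/-- The vertices of the cross-polytope, generalizing `K1Vertices`: the standard basis vectors and
their negatives. -/
def crossPolytopeVertices (𝕜 ι : Type*) [Field 𝕜] [DecidableEq ι] : Set (ι → 𝕜) :=
  {v | ∃ j, v = Pi.single j 1 ∨ v = Pi.single j (-1)}

section CrossPolytope

variable {𝕜 ι : Type*} [Field 𝕜] [LinearOrder 𝕜] [IsStrictOrderedRing 𝕜]

theorem sum_abs_sub_le_of_mem_vadd_smul_crossPolytope [Fintype ι] {r : 𝕜} (hr : 0 ≤ r)
    {u x y : ι → 𝕜} (hx : x ∈ u +ᵥ r • crossPolytope 𝕜 ι) (hy : y ∈ u +ᵥ r • crossPolytope 𝕜 ι) :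
    ∑ i, |x i - y i| ≤ 2 * r := by
  obtain ⟨_, ⟨a, ha, rfl⟩, rfl⟩ := hx
  obtain ⟨_, ⟨b, hb, rfl⟩, rfl⟩ := hy
  calc ∑ i, |(u +ᵥ r • a) i - (u +ᵥ r • b) i|
      = r * ∑ i, |a i - b i| := by
        simp [Finset.mul_sum, ← mul_sub, abs_mul, abs_of_nonneg hr]
    _ ≤ r * ∑ i, (|a i| + |b i|) := by gcongr with i; exact abs_sub _ _
    _ = r * (∑ i, |a i| + ∑ i, |b i|) := by rw [Finset.sum_add_distrib]
    _ ≤ r * (1 + 1) := by gcongr <;> assumption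
    _ = 2 * r := by ring

variable [DecidableEq ι] {e : ι → 𝕜}

theorem crossPolytopeFacet_eq_image_stdSimplex [Fintype ι] (e : ι → 𝕜) :
    crossPolytopeFacet e = (· * e) '' stdSimplex 𝕜 ι := by
  rw [← convexHull_rangle_single_eq_stdSimplex]
  refine Eq.trans ?_ ((LinearMap.mulRight 𝕜 e).image_convexHull _).symm
  simp [crossPolytopeFacet, ← Set.range_comp, Function.comp_def, ← Pi.single_mul_left]

theorem eq_of_single_mem_crossPolytopeFacet [Finite ι] (he : ∀ i, e i ≠ 0) {j : ι} {s : 𝕜}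
    (h : Pi.single j s ∈ crossPolytopeFacet e) : s = e j := by
  cases nonempty_fintype ι
  rw [crossPolytopeFacet_eq_image_stdSimplex] at h
  obtain ⟨w, hw, hws⟩ := h
  have w_eq_zero (i : ι) (hij : i ≠ j) : w i = 0 := by
    simpa [hij, he i] using congrFun hws i
  have w_eq_one : w j = 1 := by
    rw [← hw.2, Fintype.sum_eq_single j w_eq_zero]
  simpa [w_eq_one] using (congrFun hws j).symm

variable [Fintype ι]

theorem crossPolytopeFacet_inter_subset_image_homothety {r : 𝕜} (hr : 0 < r) {u : ι → 𝕜}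
    (he : ∀ i, |e i| = 1) {j : ι} (hv : Pi.single j (e j) ∈ u +ᵥ r • crossPolytope 𝕜 ι) :
    crossPolytopeFacet e ∩ (u +ᵥ r • crossPolytope 𝕜 ι) ⊆
      AffineMap.homothety (Pi.single j (e j) : ι → 𝕜) r '' crossPolytopeFacet e := by
  have single_eq : Pi.single j (e j) = Pi.single j 1 * e := by rw [← Pi.single_mul_left, one_mul]
  simp only [crossPolytopeFacet_eq_image_stdSimplex, single_eq] at hv ⊢
  rintro _ ⟨⟨w, hw, rfl⟩, hx⟩
  have dist_le : 2 * (1 - w j) ≤ 2 * r := by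
    rw [← sum_abs_sub_single_of_mem_stdSimplex hw]
    simpa [← sub_mul, abs_mul, he] using sum_abs_sub_le_of_mem_vadd_smul_crossPolytope hr.le hx hv
  obtain ⟨y, hy, rfl⟩ := mem_image_homothety_stdSimplex hr hw
    (sub_le_comm.1 (le_of_mul_le_mul_left dist_le two_pos))
  refine ⟨y * e, ⟨y, hy, rfl⟩, ?_⟩
  simp only [AffineMap.homothety_apply, vsub_eq_sub, vadd_eq_add, add_mul, sub_mul, smul_mul_assoc]

theorem facet_intersection_in_homothet_general {r : 𝕜} (hr : 0 < r) {u v : ι → 𝕜}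
    (hv : v ∈ crossPolytopeVertices 𝕜 ι) (hvmem : v ∈ u +ᵥ r • crossPolytope 𝕜 ι)
    (he : ∀ i, e i = 1 ∨ e i = -1) (hvF : v ∈ crossPolytopeFacet e) :
    crossPolytopeFacet e ∩ (u +ᵥ r • crossPolytope 𝕜 ι) ⊆
      (fun y ↦ v + r • (y - v)) '' crossPolytopeFacet e := by
  have abs_e (i : ι) : |e i| = 1 := (abs_eq zero_le_one).2 (he i)
  have e_ne_zero (i : ι) : e i ≠ 0 := abs_ne_zero.1 (abs_e i ▸ one_ne_zero)
  obtain ⟨j, s, rfl⟩ : ∃ j s, v = Pi.single j s := hv.imp fun j h ↦ h.elim (⟨1, ·⟩) (⟨-1, ·⟩)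
  obtain rfl := eq_of_single_mem_crossPolytopeFacet e_ne_zero hvF
  simpa only [AffineMap.coe_homothety, vsub_eq_sub, vadd_eq_add, add_comm] using
    crossPolytopeFacet_inter_subset_image_homothety hr abs_e hvmem

end CrossPolytope

theorem K1_eq_crossPolytope : K1 = crossPolytope ℝ (Fin 3) := by
  simp only [K1, crossPolytope, Fin.sum_univ_three]

theorem vec3_eq_single {α : Type*} [Zero α] (a : α) :
    ![a, 0, 0] = Pi.single 0 a ∧ ![0, a, 0] = Pi.single 1 a ∧ ![0, 0, a] = Pi.single 2 a := by
  refine ⟨?_, ?_, ?_⟩ <;> ext i <;> fin_cases i <;> rfl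

theorem K1Facet_eq_crossPolytopeFacet (e : Fin 3 → ℝ) : K1Facet e = crossPolytopeFacet e := by
  simp only [K1Facet, crossPolytopeFacet, vec3_eq_single]
  congr 1
  ext x
  simp [Fin.exists_fin_succ, eq_comm]

theorem K1Vertices_eq_crossPolytopeVertices :
    K1Vertices = crossPolytopeVertices ℝ (Fin 3) := by
  ext v
  simp [K1Vertices, crossPolytopeVertices, vec3_eq_single, Fin.exists_fin_succ, or_assoc]

/-- If `λ • K1 + u` (with `0 < λ ≤ 1`) contains a vertex `v` of `K1`, then for every facet
`F` of `K1` containing `v`, the intersection `F ∩ (λ • K1 + u)` is contained in a homothetic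
copy of `F` with centre `v` and ratio `μ ≤ λ`. -/
theorem facet_intersection_in_homothet (lam : ℝ) (hlam₀ : 0 < lam) (hlam₁ : lam ≤ 1)
    (u : Fin 3 → ℝ) (v : Fin 3 → ℝ) (hv : v ∈ K1Vertices) (hvmem : v ∈ u +ᵥ lam • K1)
    (e : Fin 3 → ℝ) (he : ∀ i, e i = 1 ∨ e i = -1) (hvF : v ∈ K1Facet e) :
    ∃ μ : ℝ, 0 ≤ μ ∧ μ ≤ lam ∧
      K1Facet e ∩ (u +ᵥ lam • K1) ⊆ (fun y => v + μ • (y - v)) '' K1Facet e := by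
  rw [K1_eq_crossPolytope, K1Facet_eq_crossPolytopeFacet, K1Vertices_eq_crossPolytopeVertices] at *
  exact ⟨lam, hlam₀.le, le_rfl, facet_intersection_in_homothet_general hlam₀ hv hvmem he hvF⟩
end
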